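/- Let x, τ be complex numbers with Re(τ) > 0, and let c₁, c₂ be real numbers with 0 < c₁ < 1 and 0 < c₂ < 1. Then ∫_{t ∈ ℝ} (e^{iπτ(c₁ + e^{iπ/4}t)² + 2πix(c₁ + e^{iπ/4}t)}/(e^{2πi(c₁ + e^{iπ/4}t)} − 1))·e^{iπ/4} dt = ∫_{t ∈ ℝ} (e^{iπτ(c₂ + e^{iπ/4}t)² + 2πix(c₂ + e^{iπ/4}t)}/(e^{2πi(c₂ + e^{iπ/4}t)} − 1))·e^{iπ/4} dt; that is, the value of the Mordell integral Φ(x, τ) does not depend on where the slope-1 integration line crosses the real axis within the interval (0, 1). -/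

import Mathlib

open scoped Real
open MeasureTheory Set Complex

/-!
The integration lines are `u = c + w t` with a common direction `w`. In the coordinate `z = u / w`
they become horizontal, at heights proportional to `c`. On the strip between two of them the
integrand is holomorphic, because its poles are the integers `u` and none of these lies between the
crossing points. It decays there like a Gaussian, because the real part of `π i τ w²` is negative
while `1 / (exp (2 π i w z) - 1)` stays bounded near both ends of the strip. By Cauchy's theorem on
rectangles whose vertical sides move to infinity, the two integrals agree.
-/

open Filter Asymptotics
open scoped Topology Interval

section HorizontalStrips

/-- The filter of neighbourhoods of the two ends `re z → ±∞` of the horizontal strip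
`{z | z.im ∈ K}`; limits along it are uniform in `z.im ∈ K`. -/
def stripEnds (K : Set ℝ) : Filter ℂ :=
  comap re (cocompact ℝ) ⊓ 𝓟 (im ⁻¹' K)

theorem tendsto_re_stripEnds (K : Set ℝ) : Tendsto re (stripEnds K) (cocompact ℝ) :=
  tendsto_comap.mono_left inf_le_left

theorem eventually_im_mem_stripEnds (K : Set ℝ) : ∀ᶠ z in stripEnds K, z.im ∈ K :=
  mem_inf_of_right (mem_principal_self _)

theorem tendsto_ofReal_add_mul_I_stripEnds {K : Set ℝ} {y : ℝ} (hy : y ∈ K) :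
    Tendsto (fun t : ℝ => (t : ℂ) + y * I) (cocompact ℝ) (stripEnds K) :=
  tendsto_inf.2 ⟨tendsto_comap_iff.2 <| tendsto_id.congr fun t => by simp,
    tendsto_principal.2 <| by simp [hy]⟩

theorem tendsto_const_mul_stripEnds {b : ℂ} (hb : b.re ≠ 0) {K : Set ℝ}
    (hK : Bornology.IsBounded K) :
    Tendsto (b * ·) (stripEnds K) (comap re (cocompact ℝ)) := by
  obtain ⟨M, hM⟩ := hK.exists_norm_le
  have hre : Tendsto (fun z : ℂ => |b.re| * |z.re|) (stripEnds K) atTop :=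
    ((tendsto_norm_cocompact_atTop (E := ℝ)).comp (tendsto_re_stripEnds K)).const_mul_atTop
      (abs_pos.2 hb)
  rw [tendsto_comap_iff, ← Metric.cobounded_eq_cocompact, ← tendsto_norm_atTop_iff_cobounded]
  refine tendsto_atTop_mono' _ ?_ (tendsto_atTop_add_const_right _ (-(|b.im| * M)) hre)
  filter_upwards [eventually_im_mem_stripEnds K] with z hz
  calc |b.re| * |z.re| + -(|b.im| * M)
      ≤ |b.re * z.re| - |b.im * z.im| := by
        rw [abs_mul, abs_mul, ← sub_eq_add_neg]
        gcongr
        exact hM _ hz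
    _ ≤ |(b * z).re| := by
        rw [mul_re]
        exact abs_sub_abs_le_abs_sub _ _

variable {E : Type*} [NormedAddCommGroup E]

theorem integrable_horizontal_of_isBigO {f : ℂ → E} {g : ℝ → ℝ} {K : Set ℝ} {y : ℝ} (hy : y ∈ K)
    (hf : ContinuousOn f (im ⁻¹' K)) (hfg : f =O[stripEnds K] fun z => g z.re)
    (hg : Integrable g) : Integrable fun t : ℝ => f (t + y * I) := by
  have hcont : Continuous fun t : ℝ => f (t + y * I) :=
    hf.comp_continuous (by fun_prop) fun t => by simpa using hy
  refine hcont.locallyIntegrable.integrable_of_isBigO_cocompact (g := g) ?_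
    (hg.integrableAtFilter _)
  simpa [Function.comp_def] using hfg.comp_tendsto (tendsto_ofReal_add_mul_I_stripEnds hy)

theorem integral_comp_const_add_mul_ofReal [NormedSpace ℝ E] (F : ℂ → E) {w : ℂ}
    (hw : w ≠ 0) (c : ℂ) :
    ∫ t : ℝ, F (c + w * t) = ∫ t : ℝ, F (w * (t + (c * w⁻¹).im * I)) := by
  rw [← integral_add_right_eq_self (fun t : ℝ => F (w * (t + (c * w⁻¹).im * I))) (c * w⁻¹).re]
  refine integral_congr_ae (.of_forall fun t => congrArg F ?_)
  calc c + w * t = w * (t + c * w⁻¹) := by rw [mul_add, mul_left_comm w, mul_inv_cancel₀ hw]; ring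
    _ = w * (t + ((c * w⁻¹).re + (c * w⁻¹).im * I)) := by rw [re_add_im]
    _ = w * ((t + (c * w⁻¹).re : ℝ) + (c * w⁻¹).im * I) := by push_cast; ring

variable {f : ℂ → E} {y₁ y₂ : ℝ}

theorem tendsto_vertical_integral_zero [NormedSpace ℝ E]
    (hf : Tendsto f (stripEnds [[y₁, y₂]]) (𝓝 0)) :
    Tendsto (fun T : ℝ => ∫ y in y₁..y₂, f (T + y * I)) (cocompact ℝ) (𝓝 0) := by
  refine Metric.tendsto_nhds.2 fun ε hε => ?_
  set δ : ℝ := ε / (|y₂ - y₁| + 1)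
  have hδ : 0 < δ := by positivity
  have hsmall := eventually_inf_principal.1 (hf.eventually (Metric.ball_mem_nhds 0 hδ))
  filter_upwards [eventually_comap.1 hsmall] with T hT
  rw [dist_zero_right]
  calc ‖∫ y in y₁..y₂, f (T + y * I)‖ ≤ δ * |y₂ - y₁| :=
        intervalIntegral.norm_integral_le_of_norm_le_const fun y hy => by
          simpa using (mem_ball_zero_iff.1
            (hT (T + y * I) (by simp) (by simpa using uIoc_subset_uIcc hy))).le
    _ < δ * (|y₂ - y₁| + 1) := by gcongr; exact lt_add_one _
    _ = ε := div_mul_cancel₀ _ (by positivity)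

theorem integral_horizontal_eq_of_tendsto_zero [NormedSpace ℂ E]
    (hd : DifferentiableOn ℂ f (im ⁻¹' [[y₁, y₂]]))
    (hf : Tendsto f (stripEnds [[y₁, y₂]]) (𝓝 0))
    (h₁ : Integrable fun t : ℝ => f (t + y₁ * I)) (h₂ : Integrable fun t : ℝ => f (t + y₂ * I)) :
    ∫ t : ℝ, f (t + y₁ * I) = ∫ t : ℝ, f (t + y₂ * I) := by
  have hvert := tendsto_vertical_integral_zero hf
  rw [cocompact_eq_atBot_atTop, tendsto_sup] at hvert
  have hsides : Tendsto (fun T : ℝ => I • (∫ y in y₁..y₂, f ((-T : ℝ) + y * I)) -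
      I • ∫ y in y₁..y₂, f (T + y * I)) atTop (𝓝 0) := by
    simpa using ((hvert.1.comp tendsto_neg_atTop_atBot).const_smul I).sub (hvert.2.const_smul I)
  have hrect (T : ℝ) : (∫ t in (-T)..T, f (t + y₁ * I)) - (∫ t in (-T)..T, f (t + y₂ * I)) =
      I • (∫ y in y₁..y₂, f ((-T : ℝ) + y * I)) - I • ∫ y in y₁..y₂, f (T + y * I) := by
    have hcauchy := integral_boundary_rect_eq_zero_of_differentiableOn f ⟨-T, y₁⟩ ⟨T, y₂⟩
      (hd.mono inter_subset_right)
    rw [sub_eq_zero] at hcauchy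
    exact eq_sub_of_add_eq hcauchy
  have hlines := (intervalIntegral_tendsto_integral h₁ tendsto_neg_atTop_atBot tendsto_id).sub
    (intervalIntegral_tendsto_integral h₂ tendsto_neg_atTop_atBot tendsto_id)
  exact sub_eq_zero.1 (tendsto_nhds_unique (hlines.congr hrect) hsides)

end HorizontalStrips

section Growth

theorem re_quadratic_le {a : ℂ} (ha : a.re < 0) (b z : ℂ) :
    (a * z ^ 2 + b * z).re ≤ a.re / 2 * z.re ^ 2 +
      ((b.re - 2 * a.im * z.im) ^ 2 / (-2 * a.re) - a.re * z.im ^ 2 - b.im * z.im) := by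
  set k : ℝ := b.re - 2 * a.im * z.im
  have hexpand : (a * z ^ 2 + b * z).re =
      a.re * z.re ^ 2 + k * z.re - a.re * z.im ^ 2 - b.im * z.im := by
    simp only [k, pow_two, add_re, mul_re, mul_im]
    ring
  have hne : a.re ≠ 0 := ha.ne
  have hsquare : k ^ 2 / (-2 * a.re) - a.re / 2 * z.re ^ 2 - k * z.re =
      (k + a.re * z.re) ^ 2 / (-2 * a.re) := by
    field_simp
    ring
  have hnonneg : 0 ≤ (k + a.re * z.re) ^ 2 / (-2 * a.re) := div_nonneg (sq_nonneg _) (by linarith)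
  linarith

theorem isBigO_cexp_quadratic_stripEnds {a : ℂ} (ha : a.re < 0) (b : ℂ) {K : Set ℝ}
    (hK : IsCompact K) :
    (fun z => cexp (a * z ^ 2 + b * z)) =O[stripEnds K]
      fun z => rexp (a.re / 2 * z.re ^ 2) := by
  obtain ⟨M, hM⟩ := hK.bddAbove_image
    (f := fun y => (b.re - 2 * a.im * y) ^ 2 / (-2 * a.re) - a.re * y ^ 2 - b.im * y) (by fun_prop)
  refine .of_bound (rexp M) ?_
  filter_upwards [eventually_im_mem_stripEnds K] with z hz
  rw [norm_exp, Real.norm_of_nonneg (Real.exp_nonneg _), ← Real.exp_add, Real.exp_le_exp]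
  linarith [re_quadratic_le ha b z, hM (mem_image_of_mem _ hz)]

theorem isBigO_inv_cexp_sub_one :
    (fun z => (cexp z - 1)⁻¹) =O[comap re (cocompact ℝ)] fun _ => (1 : ℝ) := by
  rw [cocompact_eq_atBot_atTop, comap_sup]
  refine .sup ?_ ?_
  · exact ((tendsto_exp_comap_re_atBot.sub_const 1).inv₀ (by simp)).isBigO_one ℝ
  · have hinfty : Tendsto (fun z => cexp z - 1) (comap re atTop) (Bornology.cobounded ℂ) :=
      (IsometryEquiv.subRight (1 : ℂ)).isometry.antilipschitz.tendsto_cobounded.comp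
        tendsto_exp_comap_re_atTop
    exact (tendsto_inv₀_cobounded.comp hinfty).isBigO_one ℝ

theorem tendsto_exp_neg_mul_sq_cocompact {a : ℝ} (ha : 0 < a) :
    Tendsto (fun t : ℝ => rexp (-a * t ^ 2)) (cocompact ℝ) (𝓝 0) := by
  simpa using tendsto_rpow_abs_mul_exp_neg_mul_sq_cocompact ha 0

end Growth

/-- The integrand `e^{iπτu² + 2πixu} / (e^{2πiu} - 1)` of the Mordell integral `Φ(x, τ)`, as a
function of the point `u` on the integration line and without the factor `du/dt`. -/
noncomputable def mordellIntegrand (x τ u : ℂ) : ℂ :=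
  cexp (π * I * τ * u ^ 2 + 2 * π * I * x * u) / (cexp (2 * π * I * u) - 1)

section MordellIntegrand

theorem differentiableAt_mordellIntegrand (x τ : ℂ) {u : ℂ} (hu : ∀ n : ℤ, u ≠ n) :
    DifferentiableAt ℂ (mordellIntegrand x τ) u := by
  have hden : cexp (2 * π * I * u) - 1 ≠ 0 := fun h => by
    obtain ⟨n, hn⟩ := exp_eq_one_iff.1 (sub_eq_zero.1 h)
    exact hu n (mul_left_cancel₀ two_pi_I_ne_zero (hn.trans (mul_comm _ _)))
  unfold mordellIntegrand
  fun_prop (disch := exact hden)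

theorem isBigO_mordellIntegrand_stripEnds (x : ℂ) {τ w : ℂ} (hw : w.im ≠ 0)
    (hτ : 0 < (τ * w ^ 2).im) {K : Set ℝ} (hK : IsCompact K) :
    (fun z => mordellIntegrand x τ (w * z)) =O[stripEnds K]
      fun z => rexp (-(π * (τ * w ^ 2).im / 2) * z.re ^ 2) := by
  have hre : (π * I * τ * w ^ 2).re = -(π * (τ * w ^ 2).im) := by
    rw [mul_assoc _ τ, mul_assoc, re_ofReal_mul, I_mul_re, mul_neg]
  have hnum := isBigO_cexp_quadratic_stripEnds (a := π * I * τ * w ^ 2)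
    (by rw [hre]; exact neg_lt_zero.2 (mul_pos Real.pi_pos hτ)) (2 * π * I * x * w) hK
  have hden := isBigO_inv_cexp_sub_one.comp_tendsto
    (tendsto_const_mul_stripEnds (b := 2 * π * I * w) (by simpa using hw) hK.isBounded)
  refine (hnum.mul hden).congr (fun z => ?_) (fun z => ?_)
  · simp only [mordellIntegrand, Function.comp_apply, div_eq_mul_inv]
    ring_nf
  · rw [hre, neg_div, Function.comp_apply, mul_one]

theorem mul_ne_intCast_of_im_mem_uIcc {w : ℂ} (hw : w.im ≠ 0) {c₁ c₂ : ℝ}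
    (hc : ∀ n : ℤ, (n : ℝ) ∉ [[c₁, c₂]]) {z : ℂ}
    (hz : z.im ∈ [[(c₁ * w⁻¹).im, (c₂ * w⁻¹).im]]) (n : ℤ) : w * z ≠ n := by
  intro h
  have hw₀ : w ≠ 0 := by rintro rfl; exact hw rfl
  have hinv : w⁻¹.im ≠ 0 := by simpa [inv_im, hw₀] using hw
  have hzn : z.im = n * w⁻¹.im := by
    rw [← im_ofReal_mul, ofReal_intCast, ← h, mul_comm w, mul_inv_cancel_right₀ hw₀]
  rw [im_ofReal_mul, im_ofReal_mul, hzn] at hz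
  have hmem : (n : ℝ) ∈ (· * w⁻¹.im) ⁻¹' [[c₁ * w⁻¹.im, c₂ * w⁻¹.im]] := hz
  rw [preimage_mul_const_uIcc hinv, mul_div_cancel_right₀ _ hinv,
    mul_div_cancel_right₀ _ hinv] at hmem
  exact hc n hmem

end MordellIntegrand

section DiagonalCrossing

theorem cexp_pi_mul_I_div_four_sq : cexp (π * I / 4) ^ 2 = I := by
  calc cexp (π * I / 4) ^ 2 = cexp (π / 2 * I) := by rw [← exp_nat_mul]; push_cast; ring_nf
    _ = I := exp_pi_div_two_mul_I

theorem im_ne_zero_of_sq_eq_I {w : ℂ} (hw : w ^ 2 = I) : w.im ≠ 0 := by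
  intro h
  simpa [pow_two, h] using congrArg im hw

theorem intCast_notMem_uIcc_of_mem_Ioo {c₁ c₂ : ℝ} {m : ℤ} (h₁ : c₁ ∈ Ioo (m : ℝ) (m + 1))
    (h₂ : c₂ ∈ Ioo (m : ℝ) (m + 1)) (n : ℤ) : (n : ℝ) ∉ [[c₁, c₂]] := by
  intro hn
  obtain ⟨hlo, hhi⟩ := ordConnected_Ioo.uIcc_subset h₁ h₂ hn
  norm_cast at hlo hhi
  lia

end DiagonalCrossing

theorem mordellPhi_indep_of_crossing_general (x τ w : ℂ) (hw : w.im ≠ 0)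
    (hτ : 0 < (τ * w ^ 2).im) (c₁ c₂ : ℝ) (hc : ∀ n : ℤ, (n : ℝ) ∉ [[c₁, c₂]]) :
    ∫ t : ℝ, mordellIntegrand x τ (c₁ + w * t) * w =
      ∫ t : ℝ, mordellIntegrand x τ (c₂ + w * t) * w := by
  have hw₀ : w ≠ 0 := by rintro rfl; exact hw rfl
  have ha : 0 < π * (τ * w ^ 2).im / 2 := by positivity
  have hd : DifferentiableOn ℂ (fun z => mordellIntegrand x τ (w * z))
      (im ⁻¹' [[(c₁ * w⁻¹).im, (c₂ * w⁻¹).im]]) := fun z hz =>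
    ((differentiableAt_mordellIntegrand x τ (mul_ne_intCast_of_im_mem_uIcc hw hc hz)).comp z
      (differentiableAt_id.const_mul w)).differentiableWithinAt
  have hO := isBigO_mordellIntegrand_stripEnds x hw hτ
    (isCompact_uIcc (a := (c₁ * w⁻¹).im) (b := (c₂ * w⁻¹).im))
  have hg := integrable_exp_neg_mul_sq ha
  rw [integral_mul_const, integral_mul_const, integral_comp_const_add_mul_ofReal _ hw₀,
    integral_comp_const_add_mul_ofReal _ hw₀]
  congr 1
  exact integral_horizontal_eq_of_tendsto_zero hd
    (hO.trans_tendsto ((tendsto_exp_neg_mul_sq_cocompact ha).comp (tendsto_re_stripEnds _)))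
    (integrable_horizontal_of_isBigO left_mem_uIcc hd.continuousOn hO hg)
    (integrable_horizontal_of_isBigO right_mem_uIcc hd.continuousOn hO hg)

/-- The value of the Mordell integral `Φ(x, τ)` does not depend on where the slope-1
integration line crosses the real axis within `(0, 1)`. -/
theorem mordellPhi_indep_of_crossing (x τ : ℂ) (hτ : 0 < τ.re) (c₁ c₂ : ℝ)
    (hc₁ : 0 < c₁) (hc₁' : c₁ < 1) (hc₂ : 0 < c₂) (hc₂' : c₂ < 1) :
    (∫ t : ℝ,
      Complex.exp ((π : ℂ) * Complex.I * τ *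
          ((c₁ : ℂ) + Complex.exp ((π : ℂ) * Complex.I / 4) * (t : ℂ)) ^ 2 +
        2 * (π : ℂ) * Complex.I * x *
          ((c₁ : ℂ) + Complex.exp ((π : ℂ) * Complex.I / 4) * (t : ℂ))) /
        (Complex.exp (2 * (π : ℂ) * Complex.I *
          ((c₁ : ℂ) + Complex.exp ((π : ℂ) * Complex.I / 4) * (t : ℂ))) - 1) *
        Complex.exp ((π : ℂ) * Complex.I / 4)) =
    (∫ t : ℝ,
      Complex.exp ((π : ℂ) * Complex.I * τ *
          ((c₂ : ℂ) + Complex.exp ((π : ℂ) * Complex.I / 4) * (t : ℂ)) ^ 2 +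
        2 * (π : ℂ) * Complex.I * x *
          ((c₂ : ℂ) + Complex.exp ((π : ℂ) * Complex.I / 4) * (t : ℂ))) /
        (Complex.exp (2 * (π : ℂ) * Complex.I *
          ((c₂ : ℂ) + Complex.exp ((π : ℂ) * Complex.I / 4) * (t : ℂ))) - 1) *
        Complex.exp ((π : ℂ) * Complex.I / 4)) := by
  have hw := cexp_pi_mul_I_div_four_sq
  exact mordellPhi_indep_of_crossing_general x τ _ (im_ne_zero_of_sq_eq_I hw)
    (by simpa [hw] using hτ) c₁ c₂
    (intCast_notMem_uIcc_of_mem_Ioo (m := 0) (by simp [*]) (by simp [*]))
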